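/- Let p_1 be a maximal element and p_2 a minimal element of a finite poset P (p_1 ≠ p_2), with λ(P - {p_1}) = λ(P - {p_2}) = λ(P) - {B} and λ(P - {p_1, p_2}) = λ(P) - {A, B}. Then the column x_B of B and the column x_A of A satisfy x_A ≤ x_B ≤ x_A + 1. -/

import Mathlib

open Finset

/-- `cMax α k` is the maximal cardinality of a union of `k` pairwise disjoint chains
in the finite poset `α`. -/
noncomputable def cMax (α : Type*) [PartialOrder α] [Fintype α] [DecidableEq α] (k : ℕ) : ℕ :=
  sSup {n : ℕ | ∃ f : Fin k → Finset α,
    (∀ i, IsChain (· ≤ ·) (↑(f i) : Set α)) ∧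
    Pairwise (Function.onFun Disjoint f) ∧
    n = (Finset.univ.biUnion f).card}

/-- `aMax α k` is the maximal cardinality of a union of `k` pairwise disjoint antichains
in the finite poset `α`. -/
noncomputable def aMax (α : Type*) [PartialOrder α] [Fintype α] [DecidableEq α] (k : ℕ) : ℕ :=
  sSup {n : ℕ | ∃ f : Fin k → Finset α,
    (∀ i, IsAntichain (· ≤ ·) (↑(f i) : Set α)) ∧
    Pairwise (Function.onFun Disjoint f) ∧
    n = (Finset.univ.biUnion f).card}

/-- The `k`-th row length of the Greene shape `λ(α)`. -/
noncomputable def lam (α : Type*) [PartialOrder α] [Fintype α] [DecidableEq α] (k : ℕ) : ℕ :=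
  cMax α k - cMax α (k - 1)

/-- The `k`-th column length of the Greene shape, `μ_k = a_k - a_{k-1}`. -/
noncomputable def mu (α : Type*) [PartialOrder α] [Fintype α] [DecidableEq α] (k : ℕ) : ℕ :=
  aMax α k - aMax α (k - 1)

/-!
Let `maxGain P k` be the sum of the first `k` columns of the Greene shape of `P`. It is the optimal
value of a linear program, dual to covering `P` by chains of cost `k`, whose feasible solutions are
pairs of potentials with values in a window `[i, i + k]`. Pointwise meets and joins of feasible
pairs are feasible, and they preserve the total gain.

Let `p₁` be maximal and `p₂` minimal. Meet and join of optimal pairs for `P` and `P - {p₁, p₂}`,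
extended suitably to the deleted elements, show that `maxGain` is submodular:
`maxGain P k + maxGain (P - {p₁, p₂}) k ≤ maxGain (P - {p₁}) k + maxGain (P - {p₂}) k`.
Starting from `P - {p₁}` and `P - {p₂}` instead, the extra room in a window longer by one gives
`maxGain (P - {p₁}) k + maxGain (P - {p₂}) (k + 1) ≤
  maxGain P (k + 1) + maxGain (P - {p₁, p₂}) k`.
Deleting `p₂` from `P` lowers `maxGain _ k` by one exactly when `x_B ≤ k`, and deleting it from
`P - {p₁}` lowers it by one exactly when `x_A ≤ k`. Hence `x_B ≤ k` implies `x_A ≤ k`, and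
`x_A ≤ k` implies `x_B ≤ k + 1`.
-/

section ConcaveSequences

variable {R : Type*} [CommRing R] [LinearOrder R] [IsStrictOrderedRing R]

theorem sub_le_mul_sub_of_antitone_sub {a : ℕ → R} (ha : Antitone fun i ↦ a (i + 1) - a i)
    (j j' : ℕ) : a j' - a j ≤ ((j' : R) - j) * (a (j + 1) - a j) := by
  rcases le_total j j' with h | h
  · induction j', h using Nat.le_induction with
    | base => simp
    | succ m hm ih =>
      have slope_le : a (m + 1) - a m ≤ a (j + 1) - a j := ha hm
      push_cast
      linarith
  · induction j, h using Nat.le_induction with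
    | base => simp
    | succ m hm ih =>
      have slope_le : a (m + 1 + 1) - a (m + 1) ≤ a (m + 1) - a m := ha (Nat.le_succ m)
      have : (j' : R) ≤ m := by exact_mod_cast hm
      push_cast
      nlinarith

theorem sum_range_min_sub_le (c : ℕ → R) (j : R) {k N : ℕ} (hk : k ≤ N) :
    ∑ i ∈ range N, min (c (i + 1) - c i) j ≤ j * k + c N - c k := by
  have initial : ∑ i ∈ range k, min (c (i + 1) - c i) j ≤ j * k :=
    (sum_le_sum fun _ _ ↦ min_le_right _ _).trans_eq (by simp [mul_comm])
  have final : ∑ i ∈ Ico k N, min (c (i + 1) - c i) j ≤ c N - c k :=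
    (sum_le_sum fun _ _ ↦ min_le_left _ _).trans_eq (sum_Ico_sub c hk)
  rw [← sum_range_add_sum_Ico _ hk]
  linarith

theorem exists_sum_range_min_sub_eq {c : ℕ → R} (hc : Antitone fun i ↦ c (i + 1) - c i) (j : R)
    (N : ℕ) : ∃ k ≤ N, ∑ i ∈ range N, min (c (i + 1) - c i) j = j * k + c N - c k := by
  induction N with
  | zero => exact ⟨0, le_rfl, by simp⟩
  | succ N ih =>
    rcases le_total j (c (N + 1) - c N) with hj | hj
    · refine ⟨N + 1, le_rfl, ?_⟩
      have saturated : ∀ i ∈ range (N + 1), min (c (i + 1) - c i) j = j := fun i hi ↦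
        min_eq_right (hj.trans (hc (Nat.lt_succ_iff.1 (mem_range.1 hi))))
      rw [sum_congr rfl saturated]
      simp [mul_comm]
    · obtain ⟨k, hk, h⟩ := ih
      refine ⟨k, hk.trans N.le_succ, ?_⟩
      rw [sum_range_succ, h, min_eq_left hj]
      ring

end ConcaveSequences

section PotentialPairs

/-- A feasible solution `(u, v)` of the linear program dual to covering elements of `β` by chains
at cost `j - i` per chain. Chains are paths in the network in which every `x` is split into an
entry with potential `u x` and an exit with potential `v x`, the source has potential `i` and the
sink has potential `j`; the arc from the entry to the exit of `x` earns one unit. -/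
structure IsPotentialPair {β : Type*} [PartialOrder β] (i j : ℤ) (u v : β → ℤ) : Prop where
  le_left : ∀ x, i ≤ u x
  right_le : ∀ x, v x ≤ j
  right_le_left_add_one : ∀ x, v x ≤ u x + 1
  right_le_left_of_lt : ∀ ⦃x y⦄, x < y → v x ≤ u y

/-- The objective of the dual program. A summand is at most `1`, and for each of the `j - i` values
`l ∈ [i, j)` the elements with `u x = l` and `v x = l + 1` form an antichain. -/
def gain {β : Type*} [Fintype β] (u v : β → ℤ) : ℤ :=
  ∑ x, (v x - u x)

/-- The optimal value of the dual program with chains of cost `k`. By Greene's theorem this is the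
sum of the first `k` columns of the shape of `β`. -/
noncomputable def maxGain (β : Type*) [PartialOrder β] [Fintype β] (k : ℕ) : ℤ :=
  sSup {g | ∃ u v : β → ℤ, IsPotentialPair 0 (k : ℤ) u v ∧ gain u v = g}

theorem gain_add_const {β : Type*} [Fintype β] (u v : β → ℤ) (c : ℤ) :
    gain (fun x ↦ u x + c) (fun x ↦ v x + c) = gain u v := by
  simp [gain]

theorem gain_inf_add_gain_sup {β : Type*} [Fintype β] (u v u' v' : β → ℤ) :
    gain (u ⊓ u') (v ⊓ v') + gain (u ⊔ u') (v ⊔ v') = gain u v + gain u' v' := by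
  simp only [gain, ← sum_add_distrib]
  refine sum_congr rfl fun x _ ↦ ?_
  have hu := min_add_max (u x) (u' x)
  have hv := min_add_max (v x) (v' x)
  simp only [Pi.inf_apply, Pi.sup_apply]
  linarith

variable {β : Type*} [PartialOrder β] {i j i' j' : ℤ} {u v u' v' : β → ℤ}

theorem isPotentialPair_const (h : i ≤ j) :
    IsPotentialPair i j (fun _ : β ↦ i) (fun _ ↦ i) where
  le_left _ := le_rfl
  right_le _ := h
  right_le_left_add_one _ := by lia
  right_le_left_of_lt _ _ _ := le_rfl

namespace IsPotentialPair

theorem add_const (h : IsPotentialPair i j u v) (c : ℤ) :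
    IsPotentialPair (i + c) (j + c) (fun x ↦ u x + c) (fun x ↦ v x + c) where
  le_left x := by linarith [h.le_left x]
  right_le x := by linarith [h.right_le x]
  right_le_left_add_one x := by linarith [h.right_le_left_add_one x]
  right_le_left_of_lt x y hxy := by linarith [h.right_le_left_of_lt hxy]

theorem mono_right (h : IsPotentialPair i j u v) (hj : j ≤ j') : IsPotentialPair i j' u v :=
  { h with right_le := fun x ↦ (h.right_le x).trans hj }

theorem inf (h : IsPotentialPair i j u v) (h' : IsPotentialPair i' j' u' v') :
    IsPotentialPair (min i i') (min j j') (u ⊓ u') (v ⊓ v') where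
  le_left x := min_le_min (h.le_left x) (h'.le_left x)
  right_le x := min_le_min (h.right_le x) (h'.right_le x)
  right_le_left_add_one x :=
    (min_le_min (h.right_le_left_add_one x) (h'.right_le_left_add_one x)).trans_eq
      (min_add_add_right _ _ _)
  right_le_left_of_lt _ _ hxy :=
    min_le_min (h.right_le_left_of_lt hxy) (h'.right_le_left_of_lt hxy)

theorem sup (h : IsPotentialPair i j u v) (h' : IsPotentialPair i' j' u' v') :
    IsPotentialPair (max i i') (max j j') (u ⊔ u') (v ⊔ v') where
  le_left x := max_le_max (h.le_left x) (h'.le_left x)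
  right_le x := max_le_max (h.right_le x) (h'.right_le x)
  right_le_left_add_one x :=
    (max_le_max (h.right_le_left_add_one x) (h'.right_le_left_add_one x)).trans_eq
      (max_add_add_right _ _ _)
  right_le_left_of_lt _ _ hxy :=
    max_le_max (h.right_le_left_of_lt hxy) (h'.right_le_left_of_lt hxy)

theorem sum_chain_le (h : IsPotentialPair i j u v) {C : Finset β}
    (hC : IsChain (· ≤ ·) (C : Set β)) {b : ℤ} (hb : i ≤ b) (hv : ∀ x ∈ C, v x ≤ b) :
    ∑ x ∈ C, (v x - u x) ≤ b - i := by
  classical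
  induction C using Finset.strongInduction generalizing b with
  | H C ih =>
    rcases C.eq_empty_or_nonempty with rfl | hne
    · simpa using hb
    · obtain ⟨m, hm⟩ := C.exists_maximal hne
      have lt_top : ∀ x ∈ C.erase m, x < m := fun x hx ↦ by
        obtain ⟨hxm, hxC⟩ := mem_erase.1 hx
        refine lt_of_le_of_ne ?_ hxm
        exact (hC hxC hm.1 hxm).elim id fun hmx ↦ hm.2 hxC hmx
      have below_top : ∑ x ∈ C.erase m, (v x - u x) ≤ u m - i :=
        ih _ (erase_ssubset hm.1) (hC.mono (by simp)) (h.le_left m)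
          fun x hx ↦ h.right_le_left_of_lt (lt_top x hx)
      rw [← add_sum_erase _ _ hm.1]
      linarith [hv m hm.1]

theorem sum_le_card (h : IsPotentialPair i j u v) (s : Finset β) :
    ∑ x ∈ s, (v x - u x) ≤ #s :=
  (sum_le_sum fun x _ ↦ by linarith [h.right_le_left_add_one x]).trans_eq
    (by simp : ∑ _ ∈ s, (1 : ℤ) = #s)

end IsPotentialPair

variable [Fintype β]

theorem IsPotentialPair.gain_le_card (h : IsPotentialPair i j u v) : gain u v ≤ Fintype.card β :=
  h.sum_le_card univ

theorem isGreatest_maxGain (β : Type*) [PartialOrder β] [Fintype β] (k : ℕ) :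
    IsGreatest {g | ∃ u v : β → ℤ, IsPotentialPair 0 (k : ℤ) u v ∧ gain u v = g} (maxGain β k) := by
  have bdd : BddAbove {g | ∃ u v : β → ℤ, IsPotentialPair 0 (k : ℤ) u v ∧ gain u v = g} := by
    refine ⟨Fintype.card β, ?_⟩
    rintro _ ⟨u, v, h, rfl⟩
    exact h.gain_le_card
  exact ⟨Int.csSup_mem ⟨_, _, _, isPotentialPair_const k.cast_nonneg, rfl⟩ bdd,
    fun _ hg ↦ le_csSup bdd hg⟩

theorem exists_isPotentialPair_gain_eq_maxGain (β : Type*) [PartialOrder β] [Fintype β] (i : ℤ)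
    (k : ℕ) : ∃ u v : β → ℤ, IsPotentialPair i (i + k) u v ∧ gain u v = maxGain β k := by
  obtain ⟨u, v, h, hg⟩ := (isGreatest_maxGain β k).1
  refine ⟨_, _, ?_, (gain_add_const u v i).trans hg⟩
  simpa [add_comm] using h.add_const i

theorem IsPotentialPair.gain_le_maxGain (h : IsPotentialPair i j u v) {k : ℕ} (hk : j = i + k) :
    gain u v ≤ maxGain β k := by
  subst hk
  refine (isGreatest_maxGain β k).2 ⟨_, _, ?_, gain_add_const u v (-i)⟩
  simpa using h.add_const (-i)

variable (β)

theorem maxGain_le_card (k : ℕ) : maxGain β k ≤ Fintype.card β := by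
  obtain ⟨u, v, h, hg⟩ := exists_isPotentialPair_gain_eq_maxGain β 0 k
  exact hg ▸ h.gain_le_card

theorem maxGain_mono : Monotone (maxGain β) := fun k l hkl ↦ by
  obtain ⟨u, v, h, hg⟩ := exists_isPotentialPair_gain_eq_maxGain β 0 k
  rw [← hg]
  exact (h.mono_right (by lia : 0 + (k : ℤ) ≤ 0 + l)).gain_le_maxGain rfl

theorem maxGain_zero : maxGain β 0 = 0 := by
  apply le_antisymm
  · obtain ⟨u, v, h, hg⟩ := exists_isPotentialPair_gain_eq_maxGain β 0 0
    rw [← hg]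
    exact sum_nonpos fun x _ ↦ sub_nonpos.2 ((h.right_le x).trans (by simpa using h.le_left x))
  · simpa [gain] using (isPotentialPair_const (β := β) (le_refl (0 : ℤ))).gain_le_maxGain (k := 0)

theorem antitone_maxGain_succ_sub : Antitone fun k ↦ maxGain β (k + 1) - maxGain β k := by
  refine antitone_nat_of_succ_le fun k ↦ ?_
  -- The windows `[1, k + 1]` and `[0, k + 2]` have meet and join of the same length `k + 1`.
  obtain ⟨u, v, h, hg⟩ := exists_isPotentialPair_gain_eq_maxGain β 1 k
  obtain ⟨u', v', h', hg'⟩ := exists_isPotentialPair_gain_eq_maxGain β 0 (k + 2)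
  have le_inf := (h.inf h').gain_le_maxGain (k := k + 1) (by lia)
  have le_sup := (h.sup h').gain_le_maxGain (k := k + 1) (by lia)
  have sum_eq := gain_inf_add_gain_sup u v u' v'
  rw [add_assoc]
  norm_num
  linarith

end PotentialPairs

section ChainDuality

variable (β : Type*) [PartialOrder β] [Fintype β] [DecidableEq β]

theorem isGreatest_cMax (k : ℕ) :
    IsGreatest {n : ℕ | ∃ f : Fin k → Finset β, (∀ i, IsChain (· ≤ ·) (f i : Set β)) ∧
      Pairwise (Function.onFun Disjoint f) ∧ n = #(univ.biUnion f)} (cMax β k) := by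
  have bdd : BddAbove {n : ℕ | ∃ f : Fin k → Finset β, (∀ i, IsChain (· ≤ ·) (f i : Set β)) ∧
      Pairwise (Function.onFun Disjoint f) ∧ n = #(univ.biUnion f)} := by
    refine ⟨Fintype.card β, ?_⟩
    rintro _ ⟨f, -, -, rfl⟩
    exact card_le_univ _
  refine ⟨Nat.sSup_mem ⟨_, fun _ ↦ ∅, ?_, ?_, rfl⟩ bdd, fun _ hn ↦ le_csSup bdd hn⟩
  · simp
  · exact fun _ _ _ ↦ disjoint_empty_left _

theorem maxGain_add_cMax_le (j k : ℕ) :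
    maxGain β j + cMax β k ≤ j * k + Fintype.card β := by
  obtain ⟨f, chain, disj, card_eq⟩ := (isGreatest_cMax β k).1
  obtain ⟨u, v, h, hg⟩ := exists_isPotentialPair_gain_eq_maxGain β 0 j
  have covered : ∑ x ∈ univ.biUnion f, (v x - u x) ≤ j * k := by
    rw [sum_biUnion fun a _ b _ hab ↦ disj hab]
    calc ∑ i, ∑ x ∈ f i, (v x - u x)
        ≤ ∑ _ : Fin k, (j : ℤ) := sum_le_sum fun i _ ↦ by
          simpa using h.sum_chain_le (chain i) (by simp) fun x _ ↦ h.right_le x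
      _ = j * k := by simp [mul_comm]
  have uncovered := h.sum_le_card (univ.biUnion f)ᶜ
  have card_split : (#(univ.biUnion f) + #(univ.biUnion f)ᶜ : ℤ) = Fintype.card β := by
    exact_mod_cast card_add_card_compl (univ.biUnion f)
  rw [← hg, gain, ← sum_add_sum_compl (univ.biUnion f), card_eq]
  linarith

end ChainDuality

section ChainCovers

/-- The `i`-th chain of the cover encoded by a matching `M`: `M` sends `Sum.inr i` to its first
element and each later element is the image of its predecessor. Elements fixed by `M` are left
uncovered. -/
def MemChain {β : Type*} {k : ℕ} (M : β ⊕ Fin k → β ⊕ Fin k) (i : Fin k) (x : β) : Prop :=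
  ∃ s, M (.inr i) = .inl s ∧ Relation.ReflTransGen (fun a b ↦ M (.inl a) = .inl b) s x

variable {β : Type*} {k : ℕ} {M : β ⊕ Fin k → β ⊕ Fin k}

theorem MemChain.eq_of_injective (hM : M.Injective) {i i' : Fin k} {x : β} (h : MemChain M i x)
    (h' : MemChain M i' x) : i = i' := by
  obtain ⟨s, hs, hsx⟩ := h
  obtain ⟨s', hs', hsx'⟩ := h'
  have no_pred : ∀ {i s a}, M (.inr i) = .inl s → M (.inl a) ≠ .inl s := fun hi ha ↦
    Sum.inl_ne_inr (hM (ha.trans hi.symm))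
  have leftUnique : Relator.RightUnique (Function.swap fun a b ↦ M (.inl a) = .inl b) :=
    fun _ _ _ ha hb ↦ Sum.inl_injective (hM (ha.trans hb.symm))
  have starts_eq : s = s' := by
    rcases Relation.ReflTransGen.total_of_right_unique leftUnique
      (Relation.reflTransGen_swap.2 hsx) (Relation.reflTransGen_swap.2 hsx') with hss | hss
    · rcases Relation.ReflTransGen.cases_head hss with rfl | ⟨a, ha, -⟩
      exacts [rfl, (no_pred hs ha).elim]
    · rcases Relation.ReflTransGen.cases_head hss with rfl | ⟨a, ha, -⟩
      exacts [rfl, (no_pred hs' ha).elim]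
  subst starts_eq
  exact Sum.inr_injective (hM (hs.trans hs'.symm))

variable [PartialOrder β]

theorem isChain_setOf_memChain (hle : ∀ x y, M (.inl x) = .inl y → x ≤ y) (i : Fin k) :
    IsChain (· ≤ ·) {x | MemChain M i x} := by
  rintro x ⟨s, hs, hsx⟩ y ⟨s', hs', hsy⟩ -
  obtain rfl : s = s' := Sum.inl_injective (hs.symm.trans hs')
  have rightUnique : Relator.RightUnique fun a b ↦ M (.inl a) = .inl b :=
    fun _ _ _ ha hb ↦ Sum.inl_injective (ha.symm.trans hb)
  have le_of_reach {a b} (h : Relation.ReflTransGen (fun a b ↦ M (.inl a) = .inl b) a b) : a ≤ b :=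
    h.trans_induction_on (fun _ ↦ le_rfl) (hle _ _) fun _ _ ↦ le_trans
  exact (Relation.ReflTransGen.total_of_right_unique rightUnique hsx hsy).imp
    le_of_reach le_of_reach

theorem exists_memChain_of_surjective [Finite β] (hM : M.Surjective)
    (hle : ∀ x y, M (.inl x) = .inl y → x ≤ y) {x : β} (hx : M (.inl x) ≠ .inl x) :
    ∃ i, MemChain M i x := by
  induction x using WellFoundedLT.induction with
  | ind x ih =>
    obtain ⟨y | i, hy⟩ := hM (.inl x)
    · have hyx : y ≠ x := by
        rintro rfl
        exact hx hy
      have y_not_fixed : M (.inl y) ≠ .inl y := fun h ↦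
        hyx (Sum.inl_injective (h.symm.trans hy))
      obtain ⟨i, s, hs, hsy⟩ := ih y ((hle _ _ hy).lt_of_ne hyx) y_not_fixed
      exact ⟨i, s, hs, hsy.tail hy⟩
    · exact ⟨i, x, hy, .refl⟩

theorem card_filter_not_fixed_le_cMax [Fintype β] [DecidableEq β] (hM : M.Bijective)
    (hle : ∀ x y, M (.inl x) = .inl y → x ≤ y) :
    #{x | M (.inl x) ≠ .inl x} ≤ cMax β k := by
  classical
  let chain (i : Fin k) : Finset β := {x | MemChain M i x}
  calc #{x | M (.inl x) ≠ .inl x} ≤ #(univ.biUnion chain) := card_le_card fun x hx ↦ by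
        simpa [chain] using exists_memChain_of_surjective hM.2 hle (by simpa using hx)
    _ ≤ cMax β k := (isGreatest_cMax β k).2 ⟨chain, fun i ↦ ?_, fun i i' hii' ↦ ?_, rfl⟩
  · simpa [chain] using isChain_setOf_memChain hle i
  · refine disjoint_left.2 fun x hx hx' ↦ hii' ?_
    exact MemChain.eq_of_injective hM.1 (by simpa [chain] using hx) (by simpa [chain] using hx')

end ChainCovers

section ComplementarySlackness

/-- The tight arcs of a potential pair `(u, v)` with window `[0, j]`, as a bipartite graph between
chain predecessors and chain successors. A matching of an element with itself leaves the element
uncovered, `Sum.inr` stands on the left for a source and on the right for a sink, and an arc from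
source to sink is an unused chain. -/
def IsTight {β : Type*} [PartialOrder β] {k : ℕ} (j : ℤ) (u v : β → ℤ) :
    β ⊕ Fin k → β ⊕ Fin k → Prop
  | .inl x, .inl y => (x < y ∧ v x = u y) ∨ (x = y ∧ v x = u x + 1)
  | .inl x, .inr _ => v x = j
  | .inr _, .inl y => u y = 0
  | .inr _, .inr _ => j = 0

theorem gain_add_indicator {β : Type*} [Fintype β] [DecidableEq β] (u v : β → ℤ) (X Y : Finset β) :
    gain (fun y ↦ u y + if y ∈ Y then 1 else 0) (fun x ↦ v x + if x ∈ X then 1 else 0)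
      = gain u v + #X - #Y := by
  simp only [gain, sum_sub_distrib, sum_add_distrib, sum_boole, filter_univ_mem]
  ring

variable {β : Type*} [PartialOrder β] {j : ℤ} {u v : β → ℤ} {k : ℕ}

theorem IsPotentialPair.add_indicator [DecidableEq β] {i : ℤ} (h : IsPotentialPair i j u v)
    {X Y : Finset β} {s t : Prop} [Decidable s] [Decidable t]
    (self_mem : ∀ x ∈ X, v x = u x + 1 → x ∈ Y)
    (lt_mem : ∀ x ∈ X, ∀ y, x < y → v x = u y → y ∈ Y)
    (source_mem : s → ∀ y, u y = i → y ∈ Y) (sink_mem : ∀ x ∈ X, v x = j → t) :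
    IsPotentialPair (i + if s then 1 else 0) (j + if t then 1 else 0)
      (fun y ↦ u y + if y ∈ Y then 1 else 0) (fun x ↦ v x + if x ∈ X then 1 else 0) where
  le_left x := by
    have := h.le_left x
    grind
  right_le x := by
    have := h.right_le x
    grind
  right_le_left_add_one x := by
    have := h.right_le_left_add_one x
    grind
  right_le_left_of_lt x y hxy := by
    have := h.right_le_left_of_lt hxy
    grind

variable [Fintype β]

/-- Raising the potentials along a set violating Hall's condition would improve the optimum. -/
theorem IsPotentialPair.card_le_card_of_isTight_mem {j : ℕ} (h : IsPotentialPair 0 (j : ℤ) u v)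
    (hopt : ∀ l : ℕ, maxGain β l - l * k ≤ gain u v - j * k) {S N : Finset (β ⊕ Fin k)}
    (hN : ∀ a ∈ S, ∀ b, IsTight (j : ℤ) u v a b → b ∈ N) : #S ≤ #N := by
  classical
  let s : Prop := S.toRight.Nonempty
  let t : Prop := (∃ x ∈ S.toLeft, v x = j) ∨ s ∧ (j : ℤ) = 0
  have source_le : (#S.toRight : ℤ) ≤ (if s then 1 else 0) * k := by
    split_ifs with hs
    · simpa using card_le_univ S.toRight
    · simp [not_nonempty_iff_eq_empty.1 hs]
  have sink_le : (if t then 1 else 0) * k ≤ (#N.toRight : ℤ) := by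
    split_ifs with ht
    · have all_sinks : N.toRight = univ := by
        refine eq_univ_iff_forall.2 fun b ↦ mem_toRight.2 ?_
        obtain ⟨x, hx, hvx⟩ | ⟨⟨a, ha⟩, hj⟩ := ht
        · exact hN _ (mem_toLeft.1 hx) _ hvx
        · exact hN _ (mem_toRight.1 ha) _ hj
      simp [all_sinks]
    · simp
  have raised := h.add_indicator (X := S.toLeft) (Y := N.toLeft) (s := s) (t := t)
    (fun x hx hvx ↦ mem_toLeft.2 (hN _ (mem_toLeft.1 hx) _ (.inr ⟨rfl, hvx⟩)))
    (fun x hx y hxy hvx ↦ mem_toLeft.2 (hN _ (mem_toLeft.1 hx) _ (.inl ⟨hxy, hvx⟩)))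
    (fun ⟨a, ha⟩ y hy ↦ mem_toLeft.2 (hN _ (mem_toRight.1 ha) _ hy))
    fun x hx hvx ↦ .inl ⟨x, hx, hvx⟩
  obtain ⟨l, hl⟩ : ∃ l : ℕ, (j : ℤ) + (if t then 1 else 0) = 0 + (if s then 1 else 0) + l := by
    have : s → j = 0 → t := fun hs hj ↦ .inr ⟨hs, by exact_mod_cast hj⟩
    refine ⟨j + (if t then 1 else 0) - (if s then 1 else 0), ?_⟩
    grind
  have improved := (raised.gain_le_maxGain hl).trans (sub_le_iff_le_add.1 (hopt l))
  rw [gain_add_indicator] at improved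
  have l_mul_k : (l : ℤ) * k = j * k + (if t then 1 else 0) * k - (if s then 1 else 0) * k := by
    linear_combination -(k : ℤ) * hl
  have cardS : (#S.toLeft + #S.toRight : ℤ) = #S := by exact_mod_cast card_toLeft_add_card_toRight
  have cardN : (#N.toLeft + #N.toRight : ℤ) = #N := by exact_mod_cast card_toLeft_add_card_toRight
  zify
  linarith

theorem IsPotentialPair.exists_perm_isTight {j : ℕ} (h : IsPotentialPair 0 (j : ℤ) u v)
    (hopt : ∀ l : ℕ, maxGain β l - l * k ≤ gain u v - j * k) :
    ∃ M : Equiv.Perm (β ⊕ Fin k), ∀ a, IsTight (j : ℤ) u v a (M a) := by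
  classical
  let nbrs (a : β ⊕ Fin k) : Finset (β ⊕ Fin k) := {b | IsTight (j : ℤ) u v a b}
  have hall (S : Finset (β ⊕ Fin k)) : #S ≤ #(S.biUnion nbrs) :=
    h.card_le_card_of_isTight_mem hopt fun a ha b hab ↦
      mem_biUnion.2 ⟨a, ha, by simpa [nbrs] using hab⟩
  obtain ⟨M, inj, hM⟩ := (all_card_le_biUnion_card_iff_exists_injective nbrs).1 hall
  exact ⟨.ofBijective M (Finite.injective_iff_bijective.1 inj), fun a ↦ by
    simpa [nbrs] using hM a⟩

theorem gain_eq_add_card_fixed [DecidableEq β] (M : Equiv.Perm (β ⊕ Fin k))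
    (hM : ∀ a, IsTight j u v a (M a)) :
    gain u v = j * k + #{x | M (.inl x) = .inl x} := by
  let U : β ⊕ Fin k → ℤ := Sum.elim u fun _ ↦ j
  let V : β ⊕ Fin k → ℤ := Sum.elim v fun _ ↦ 0
  have slack_element (x : β) :
      V (.inl x) - U (M (.inl x)) = if M (.inl x) = .inl x then 1 else 0 := by
    have tight := hM (.inl x)
    rcases hx : M (.inl x) with y | i <;> rw [hx] at tight
    · obtain ⟨hxy, hv⟩ | ⟨rfl, hv⟩ := tight
      · simp [U, V, hv, hxy.ne']
      · simp [U, V, hv]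
    · simpa [U, V, sub_eq_zero, IsTight] using tight
  have slack_source (i : Fin k) : V (.inr i) - U (M (.inr i)) = 0 := by
    have tight := hM (.inr i)
    rcases hi : M (.inr i) with y | i' <;> rw [hi] at tight <;>
      simpa [U, V, IsTight] using tight
  calc gain u v = j * k + (∑ a, V a - ∑ a, U a) := by
        simp only [gain, U, V, Fintype.sum_sum_type, Sum.elim_inl, Sum.elim_inr, sum_sub_distrib,
          sum_const, card_univ, Fintype.card_fin, nsmul_eq_mul]
        ring
    _ = j * k + ∑ a, (V a - U (M a)) := by rw [sum_sub_distrib, Equiv.sum_comp M U]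
    _ = j * k + #{x | M (.inl x) = .inl x} := by
        simp only [Fintype.sum_sum_type, slack_element, slack_source, sum_boole, sum_const_zero,
          add_zero]

theorem exists_le_maxGain_add_cMax (β : Type*) [PartialOrder β] [Fintype β] [DecidableEq β]
    (k : ℕ) : ∃ j : ℕ, (j * k + Fintype.card β : ℤ) ≤ maxGain β j + cMax β k := by
  obtain ⟨_, ⟨j, rfl⟩, hj⟩ := Int.exists_greatest_of_bdd
    (P := (· ∈ Set.range fun j : ℕ ↦ maxGain β j - j * k))
    ⟨Fintype.card β, by
      rintro _ ⟨j, rfl⟩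
      exact (sub_le_self _ (by positivity)).trans (maxGain_le_card β j)⟩ ⟨_, 0, rfl⟩
  obtain ⟨u, v, h, hg⟩ := exists_isPotentialPair_gain_eq_maxGain β 0 j
  rw [zero_add] at h
  obtain ⟨M, hM⟩ := h.exists_perm_isTight (k := k) fun l ↦ hg ▸ hj _ ⟨l, rfl⟩
  have le_image (x y : β) (hxy : M (.inl x) = .inl y) : x ≤ y := by
    have tight := hM (.inl x)
    rw [hxy] at tight
    exact tight.elim (fun h ↦ h.1.le) fun h ↦ h.1.le
  have covered : (#{x | M (.inl x) ≠ .inl x} : ℤ) ≤ cMax β k := by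
    exact_mod_cast card_filter_not_fixed_le_cMax M.bijective le_image
  have card_split : (#{x | M (.inl x) = .inl x} + #{x | M (.inl x) ≠ .inl x} : ℤ)
      = Fintype.card β := by
    exact_mod_cast card_filter_add_card_filter_not fun x ↦ M (.inl x) = Sum.inl x
  refine ⟨j, ?_⟩
  rw [← hg, gain_eq_add_card_fixed M hM]
  linarith

end ComplementarySlackness

section GreeneDuality

variable (β : Type*) [PartialOrder β] [Fintype β] [DecidableEq β]

theorem cMax_mono : Monotone (cMax β) := monotone_nat_of_le_succ fun k ↦ by
  obtain ⟨j, hj⟩ := exists_le_maxGain_add_cMax β (k + 1)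
  have weak := maxGain_add_cMax_le β j k
  push_cast at hj
  zify
  linarith

theorem antitone_cMax_succ_sub : Antitone fun k ↦ (cMax β (k + 1) - cMax β k : ℤ) := by
  refine antitone_nat_of_succ_le fun k ↦ ?_
  obtain ⟨j, hj⟩ := exists_le_maxGain_add_cMax β (k + 1)
  have weak := maxGain_add_cMax_le β j k
  have weak' := maxGain_add_cMax_le β j (k + 2)
  push_cast at *
  rw [add_assoc]
  norm_num
  linarith

variable {β}

theorem cMax_eq_card {N : ℕ} (hN : Fintype.card β ≤ N) : cMax β N = Fintype.card β := by
  apply le_antisymm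
  · have weak := maxGain_add_cMax_le β 0 N
    simp only [maxGain_zero] at weak
    push_cast at weak
    lia
  · obtain ⟨j, hj⟩ := exists_le_maxGain_add_cMax β N
    zify
    rcases j.eq_zero_or_pos with rfl | hpos
    · simp only [maxGain_zero] at hj
      push_cast at hj
      linarith
    · have card_le : (Fintype.card β : ℤ) ≤ j * N := by
        exact_mod_cast hN.trans (Nat.le_mul_of_pos_left N hpos)
      linarith [maxGain_le_card β j]

/-- Both sides are the concave conjugate of `cMax β`, the right one by strong duality. -/
theorem sum_min_cMax_sub_eq_maxGain {N : ℕ} (hN : Fintype.card β ≤ N) (j : ℕ) :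
    ∑ i ∈ range N, min (cMax β (i + 1) - cMax β i : ℤ) j = maxGain β j := by
  apply le_antisymm
  · obtain ⟨k, hk⟩ := Int.eq_ofNat_of_zero_le (sub_nonneg.2 (maxGain_mono β j.le_succ))
    have hkN : k ≤ N := by
      have nonneg : maxGain β 0 ≤ maxGain β j := maxGain_mono β j.zero_le
      rw [maxGain_zero] at nonneg
      have := maxGain_le_card β (j + 1)
      lia
    obtain ⟨j', hj'⟩ := exists_le_maxGain_add_cMax β k
    have supergradient := sub_le_mul_sub_of_antitone_sub (antitone_maxGain_succ_sub β) j j'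
    have sum_le := sum_range_min_sub_le (fun i ↦ (cMax β i : ℤ)) j hkN
    rw [hk] at supergradient
    rw [cMax_eq_card hN] at sum_le
    linarith
  · obtain ⟨k, -, hk⟩ := exists_sum_range_min_sub_eq (c := fun i ↦ (cMax β i : ℤ))
      (antitone_cMax_succ_sub β) j N
    rw [hk, cMax_eq_card hN]
    linarith [maxGain_add_cMax_le β j k]

theorem sum_min_lam_eq_maxGain {N : ℕ} (hN : Fintype.card β ≤ N) (j : ℕ) :
    ∑ i ∈ range N, min (lam β (i + 1) : ℤ) j = maxGain β j := by
  simp only [lam, add_tsub_cancel_right, Nat.cast_sub (cMax_mono β (Nat.le_succ _))]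
  exact sum_min_cMax_sub_eq_maxGain hN j

/-- `maxGain` sums columns, so it sees the deleted box through its column index `lam β y`. -/
theorem maxGain_eq_add_of_lam_eq_sub {γ : Type*} [PartialOrder γ] [Fintype γ] [DecidableEq γ]
    {y : ℕ} (hpos : 1 ≤ lam β y) (h : ∀ i, lam γ i = lam β i - if i = y then 1 else 0) (j : ℕ) :
    maxGain β j = maxGain γ j + if lam β y ≤ j then 1 else 0 := by
  have hy : y ≠ 0 := by
    rintro rfl
    simp [lam] at hpos
  obtain ⟨r, rfl⟩ := Nat.exists_eq_succ_of_ne_zero hy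
  let N := Fintype.card β + Fintype.card γ + (r + 1)
  have row (i : ℕ) : min (lam β (i + 1) : ℤ) j
      = min (lam γ (i + 1) : ℤ) j + if i = r then (if lam β (r + 1) ≤ j then 1 else 0) else 0 := by
    rw [h]
    split_ifs <;> grind
  rw [← sum_min_lam_eq_maxGain (N := N) (by lia), ← sum_min_lam_eq_maxGain (N := N) (by lia),
    sum_congr rfl fun i _ ↦ row i, sum_add_distrib, sum_ite_eq', if_pos (mem_range.2 (by lia))]

end GreeneDuality

section Deletion

variable {α : Type*} [PartialOrder α] {i j : ℤ} {u v : α → ℤ} {p q r : α → Prop}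

theorem IsPotentialPair.raise_maximal [DecidablePred p] (h : IsPotentialPair i j u v)
    (hp : ∀ x, ¬ p x → IsMax x) :
    IsPotentialPair i j (fun x ↦ if p x then u x else max (u x) (j - 1))
      (fun x ↦ if p x then v x else j) where
  le_left x := by
    have := h.le_left x
    grind
  right_le x := by
    have := h.right_le x
    grind
  right_le_left_add_one x := by
    have := h.right_le_left_add_one x
    grind
  right_le_left_of_lt x y hxy := by
    have : p x := by_contra fun hx ↦ (hp x hx).not_lt hxy
    have := h.right_le_left_of_lt hxy
    grind

theorem IsPotentialPair.extend [DecidablePred r] {u v : {x // r x} → ℤ}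
    (h : IsPotentialPair i j u v) {e : α → ℤ} (he : Monotone e) (hi : ∀ x, i ≤ e x)
    (hj : ∀ x, e x ≤ j) (lt_kept : ∀ x y, x < y → ¬ r x → r y → e x = i)
    (kept_lt : ∀ x y, x < y → r x → ¬ r y → e y = j) :
    IsPotentialPair i j (fun x ↦ if hx : r x then u ⟨x, hx⟩ else e x)
      (fun x ↦ if hx : r x then v ⟨x, hx⟩ else e x) where
  le_left x := by
    split_ifs with hx
    exacts [h.le_left _, hi x]
  right_le x := by
    split_ifs with hx
    exacts [h.right_le _, hj x]
  right_le_left_add_one x := by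
    split_ifs with hx
    exacts [h.right_le_left_add_one _, by lia]
  right_le_left_of_lt x y hxy := by
    split_ifs with hx hy hy
    · exact h.right_le_left_of_lt hxy
    · exact (h.right_le _).trans_eq (kept_lt x y hxy hx hy).symm
    · exact (lt_kept x y hxy hx hy).trans_le (h.le_left _)
    · exact he hxy.le

variable [Fintype α]

theorem gain_le_gain_raise_maximal [DecidablePred p] (h : IsPotentialPair i j u v) :
    gain u v ≤ gain (fun x ↦ if p x then u x else max (u x) (j - 1))
      (fun x ↦ if p x then v x else j) := by
  refine sum_le_sum fun x _ ↦ ?_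
  have := h.right_le x
  have := h.right_le_left_add_one x
  grind

theorem IsPotentialPair.gain_le_maxGain_subtype [DecidablePred r] (h : IsPotentialPair i j u v)
    {k : ℕ} (hk : j = i + k) (hr : ∀ x, ¬ r x → v x ≤ u x) : gain u v ≤ maxGain {x // r x} k := by
  have kept : IsPotentialPair i j (fun x : {x // r x} ↦ u x) (fun x ↦ v x) :=
    ⟨fun _ ↦ h.le_left _, fun _ ↦ h.right_le _, fun _ ↦ h.right_le_left_add_one _,
      fun _ _ hxy ↦ h.right_le_left_of_lt hxy⟩
  have deleted : ∑ x : {x // ¬ r x}, (v x - u x) ≤ 0 :=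
    sum_nonpos fun x _ ↦ sub_nonpos.2 (hr x x.2)
  have kept_le : ∑ x : {x // r x}, (v x - u x) ≤ maxGain {x // r x} k := kept.gain_le_maxGain hk
  rw [gain, ← Fintype.sum_subtype_add_sum_subtype r]
  linarith

theorem exists_isPotentialPair_extending [DecidablePred r] (k : ℕ) {e : α → ℤ} (he : Monotone e)
    (hi : ∀ x, 0 ≤ e x) (hj : ∀ x, e x ≤ k) (lt_kept : ∀ x y, x < y → ¬ r x → r y → e x = 0)
    (kept_lt : ∀ x y, x < y → r x → ¬ r y → e y = k) :
    ∃ u v : α → ℤ, IsPotentialPair 0 (k : ℤ) u v ∧ gain u v = maxGain {x // r x} k ∧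
      ∀ x, ¬ r x → u x = e x ∧ v x = e x := by
  obtain ⟨u, v, h, hg⟩ := exists_isPotentialPair_gain_eq_maxGain {x // r x} 0 k
  rw [zero_add] at h
  refine ⟨_, _, h.extend he hi hj lt_kept kept_lt, ?_, fun x hx ↦ by simp [hx]⟩
  have deleted : ∑ x : {x // ¬ r x}, ((if hx : r x then v ⟨x, hx⟩ else e x)
      - if hx : r x then u ⟨x, hx⟩ else e x) = 0 :=
    sum_eq_zero fun x _ ↦ by simp [x.2]
  rw [gain, ← Fintype.sum_subtype_add_sum_subtype r, deleted, add_zero, ← hg]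
  exact sum_congr rfl fun x _ ↦ by simp [x.2]

variable [DecidablePred p] [DecidablePred q]

theorem maxGain_add_maxGain_inter_le (hp : IsLowerSet {x | p x}) (hq : IsUpperSet {x | q x})
    (hpq : ∀ x, p x ∨ q x) (k : ℕ) :
    maxGain α k + maxGain {x // p x ∧ q x} k ≤ maxGain {x // p x} k + maxGain {x // q x} k := by
  obtain ⟨u, v, h, hg⟩ := exists_isPotentialPair_gain_eq_maxGain α 0 k
  obtain ⟨u', v', h', hg', he⟩ := exists_isPotentialPair_extending (r := fun x ↦ p x ∧ q x) k
    (e := fun x ↦ if p x then 0 else k)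
    (fun x y hxy ↦ by have := @hp y x hxy; grind) (by grind) (by grind)
    (fun x y hxy ↦ by have := @hp y x hxy.le; grind)
    (fun x y hxy ↦ by have := @hq x y hxy.le; grind)
  have le_inf : gain (u ⊓ u') (v ⊓ v') ≤ maxGain {x // q x} k :=
    (h.inf h').gain_le_maxGain_subtype (by simp) fun x hx ↦ by
      have := h.le_left x
      have := he x
      simp only [Pi.inf_apply]
      grind
  have le_sup : gain (u ⊔ u') (v ⊔ v') ≤ maxGain {x // p x} k :=
    (h.sup h').gain_le_maxGain_subtype (by simp) fun x hx ↦ by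
      have := h.right_le x
      have := he x
      simp only [Pi.sup_apply]
      grind
  linarith [gain_inf_add_gain_sup u v u' v']

theorem maxGain_add_maxGain_succ_le (hp : ∀ x, ¬ p x → IsMax x) (hq : IsUpperSet {x | q x})
    (k : ℕ) : maxGain {x // p x} k + maxGain {x // q x} (k + 1) ≤
      maxGain α (k + 1) + maxGain {x // p x ∧ q x} k := by
  obtain ⟨u, v, h, hg, he⟩ := exists_isPotentialPair_extending (r := p) k (e := fun _ ↦ k)
    monotone_const (by simp) (by simp) (fun x y hxy hx ↦ ((hp x hx).not_lt hxy).elim) (by simp)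
  obtain ⟨u₀, v₀, h₀, hg₀, he₀⟩ := exists_isPotentialPair_extending (r := q) (k + 1)
    (e := fun _ ↦ 0) monotone_const (by simp) (by grind) (by simp)
    (fun x y hxy hx hy ↦ (hy (hq hxy.le hx)).elim)
  have h' := h₀.raise_maximal hp
  have le_gain' := gain_le_gain_raise_maximal (p := p) h₀
  set u' : α → ℤ := fun x ↦ if p x then u₀ x else max (u₀ x) ((k + 1 : ℕ) - 1)
  set v' : α → ℤ := fun x ↦ if p x then v₀ x else (k + 1 : ℕ)
  have le_inf : gain (u ⊓ u') (v ⊓ v') ≤ maxGain {x // p x ∧ q x} k :=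
    (h.inf h').gain_le_maxGain_subtype (by lia) fun x hx ↦ by
      have := h.le_left x
      have := he x
      have := he₀ x
      simp only [Pi.inf_apply, u', v']
      grind
  have le_sup : gain (u ⊔ u') (v ⊔ v') ≤ maxGain α (k + 1) :=
    (h.sup h').gain_le_maxGain (by lia)
  linarith [gain_inf_add_gain_sup u v u' v']

end Deletion

theorem max_min_elements_box_rule_general {α : Type*} [PartialOrder α] [Fintype α]
    [DecidableEq α] {p : α → Prop} [DecidablePred p] (hmax : ∀ x, ¬ p x → IsMax x)
    {p₂ : α} (hp₂ : p p₂) (hmin : IsMin p₂) {yB yA : ℕ}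
    (hBpos : 1 ≤ lam α yB) (hApos : 1 ≤ lam {x // p x} yA)
    (hB : ∀ i, lam {x // x ≠ p₂} i = lam α i - if i = yB then 1 else 0)
    (hA : ∀ i, lam {x // p x ∧ x ≠ p₂} i = lam {x // p x} i - if i = yA then 1 else 0) :
    lam {x // p x} yA ≤ lam α yB ∧ lam α yB ≤ lam {x // p x} yA + 1 := by
  have lower : IsLowerSet {x | p x} := fun x y hyx hx ↦ by_contra fun hy ↦
    hy ((hmax y hy).eq_of_le hyx ▸ hx)
  have upper : IsUpperSet {x | x ≠ p₂} := fun x y hxy hx hy ↦ hx (hmin.eq_of_le (hy ▸ hxy))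
  have dropB := maxGain_eq_add_of_lam_eq_sub hBpos hB
  have dropA := maxGain_eq_add_of_lam_eq_sub hApos hA
  constructor
  · have submodular := maxGain_add_maxGain_inter_le lower upper (by grind) (lam α yB)
    rw [dropB, dropA] at submodular
    grind
  · have shifted := maxGain_add_maxGain_succ_le hmax upper (lam {x // p x} yA)
    rw [dropB, dropA] at shifted
    grind

theorem max_min_elements_box_rule
    (α : Type*) [PartialOrder α] [Fintype α] [DecidableEq α]
    (p₁ p₂ : α) (hne : p₁ ≠ p₂)
    (h₁ : ∀ x : α, p₁ ≤ x → x = p₁) (h₂ : ∀ x : α, x ≤ p₂ → x = p₂)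
    (yB yA : ℕ) (hyB : 1 ≤ yB) (hyA : 1 ≤ yA)
    (hBpos : 1 ≤ lam α yB) (hApos : 1 ≤ lam {x : α // x ≠ p₁} yA)
    (hB1 : ∀ i : ℕ, lam {x : α // x ≠ p₁} i = lam α i - (if i = yB then 1 else 0))
    (hB2 : ∀ i : ℕ, lam {x : α // x ≠ p₂} i = lam α i - (if i = yB then 1 else 0))
    (hA : ∀ i : ℕ, lam {x : α // x ≠ p₁ ∧ x ≠ p₂} i
        = lam {x : α // x ≠ p₁} i - (if i = yA then 1 else 0)) :
    lam {x : α // x ≠ p₁} yA ≤ lam α yB ∧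
    lam α yB ≤ lam {x : α // x ≠ p₁} yA + 1 := by
  exact max_min_elements_box_rule_general (p := fun x ↦ x ≠ p₁)
    (fun x hx y hxy ↦ (h₁ y ((not_not.1 hx).ge.trans hxy)).trans_le (not_not.1 hx).ge) hne.symm
    (fun x hx ↦ (h₂ x hx).ge) hBpos hApos hB2 hA
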